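/- Every subexponential group G has the comparison property: every action of G by homeomorphisms on a zero-dimensional compact metric space admits comparison. -/

import Mathlib

/-!
STATEMENT 18 (Theorem `main` of the paper):
Every subexponential group has the comparison property: every action of a subexponential
group by homeomorphisms on a zero-dimensional compact metric space admits comparison.
-/

open Filter Topology Pointwise MeasureTheory

/-- `G` is subexponential: every finitely generated subgroup has subexponential growth,
i.e. `(1/n)·log |(R ∪ R⁻¹)^n| → 0` for every finite `R ⊆ G`. -/
def Subexponential (G : Type*) [Group G] : Prop :=
  ∀ R : Finset G,
    Tendsto (fun n : ℕ =>
        Real.log ((((R : Set G) ∪ (R : Set G)⁻¹) ^ n).ncard) / n) atTop (𝓝 0)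

/-- `A ≼ B` for an action of `G` on `X`. -/
def Subequiv (G : Type*) [Group G] (X : Type*) [TopologicalSpace X] [MulAction G X]
    (A B : Set X) : Prop :=
  ∃ (k : ℕ) (Ai : Fin k → Set X) (g : Fin k → G),
    (∀ i, IsClopen (Ai i)) ∧ A = ⋃ i, Ai i ∧
    (Pairwise fun i j => Disjoint (Ai i) (Ai j)) ∧
    (∀ i, g i • Ai i ⊆ B) ∧
    (Pairwise fun i j => Disjoint (g i • Ai i) (g j • Ai j))

/-- The action of `G` on `X` admits comparison. -/
def AdmitsComparison (G : Type*) [Group G] (X : Type*) [TopologicalSpace X]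
    [MeasurableSpace X] [MulAction G X] : Prop :=
  ∀ A B : Set X, IsClopen A → IsClopen B →
    (∀ μ : Measure X, IsProbabilityMeasure μ → SMulInvariantMeasure G X μ → μ A < μ B) →
    Subequiv G X A B

/-- `G` has the comparison property. -/
def ComparisonProperty (G : Type*) [Group G] : Prop :=
  ∀ (X : Type) [TopologicalSpace X] [CompactSpace X] [TopologicalSpace.MetrizableSpace X]
    [TotallyDisconnectedSpace X] [MeasurableSpace X] [BorelSpace X]
    [MulAction G X] [ContinuousConstSMul G X],
    AdmitsComparison G X

/-!
Join `x ∈ A` to every point `r • x ∈ B` with `r` in a fixed finite set `R`. A Hopcroft–Karp scheme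
produces, for each `n`, a clopen matching of this bipartite graph together with integer labels on
`B` that vanish at unmatched points, drop by at most one along alternating paths, and are at least
`n` next to every unmatched point of `A`. Augmentation along all paths spelled by the same word in
`R` is a single clopen modification, and there are only finitely many words of each length.

If every invariant measure gives `A` less mass than `B`, then a compactness argument with Følner
averages yields a finite `F ⊆ G` such that every translate `F • x` meets `B` more often than `A`;
double counting then shows that for `R = F * F⁻¹` the graph expands finite subsets of `A` by a
factor `c > 1`. From an unmatched point of `A` one can therefore step `n` times to all neighbours
and back to their partners, reaching at least `c ^ n` points in the `(R ∪ R⁻¹) ^ (2 * n)`-orbit of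
the point. Subexponential growth rules this out for large `n`, so all of `A` is matched.
-/

section Matching

variable {ι X Y : Type*} [TopologicalSpace X] [TopologicalSpace Y] {φ : ι → X ≃ₜ Y}
  {A : Set X} {B : Set Y}

theorem isClopen_homeomorph_image (e : X ≃ₜ Y) {S : Set X} (hS : IsClopen S) :
    IsClopen (e '' S) :=
  ⟨e.isClosed_image.2 hS.isClosed, e.isOpen_image.2 hS.isOpen⟩

variable (φ A B) in
/-- A matching in the bipartite graph that joins `x ∈ A` to every `φ i x ∈ B`, given by the clopen
sets `piece i` of those `x` that are matched to `φ i x`. -/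
structure ClopenMatching where
  piece : ι → Set X
  isClopen_piece : ∀ i, IsClopen (piece i)
  piece_subset : ∀ i, piece i ⊆ A
  mapsTo_piece : ∀ i, Set.MapsTo (φ i) (piece i) B
  eq_of_mem_piece : ∀ {i j x}, x ∈ piece i → x ∈ piece j → i = j
  eq_of_apply_eq : ∀ {i j x y}, x ∈ piece i → y ∈ piece j → φ i x = φ j y → i = j

variable (φ B) in
/-- The points all of whose neighbours in `B` have label at least `k`. -/
def aboveLevel (p : Y → ℕ) (k : ℕ) : Set X :=
  {x | ∀ i, φ i x ∈ B → k ≤ p (φ i x)}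

namespace ClopenMatching

variable {M : ClopenMatching φ A B} {p : Y → ℕ} {i : ι} {Q : Set X} {k : ℕ}

/-- The set of matched points of `A`. -/
def source (M : ClopenMatching φ A B) : Set X := ⋃ i, M.piece i

/-- The set of matched points of `B`. -/
def target (M : ClopenMatching φ A B) : Set Y := ⋃ i, φ i '' M.piece i

theorem mem_source {x : X} : x ∈ M.source ↔ ∃ i, x ∈ M.piece i := Set.mem_iUnion

theorem mem_target {y : Y} : y ∈ M.target ↔ ∃ i, ∃ x ∈ M.piece i, φ i x = y := Set.mem_iUnion

theorem eq_of_apply_eq_apply {j : ι} {x y : X} (hx : x ∈ M.piece i) (hy : y ∈ M.piece j)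
    (h : φ i x = φ j y) : x = y := by
  obtain rfl := M.eq_of_apply_eq hx hy h
  exact (φ i).injective h

theorem isClopen_source [Finite ι] (M : ClopenMatching φ A B) : IsClopen M.source :=
  isClopen_iUnion_of_finite M.isClopen_piece

theorem isClopen_target [Finite ι] (M : ClopenMatching φ A B) : IsClopen M.target :=
  isClopen_iUnion_of_finite fun i => isClopen_homeomorph_image (φ i) (M.isClopen_piece i)

/-- A dual certificate for the absence of short augmenting paths: a label on `Y` that vanishes at
the unmatched points of `B` and decreases by at most one along `φ i x`, `x`, `φ j x` when `x` is
matched to `φ i x`. -/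
structure IsPotential (M : ClopenMatching φ A B) (p : Y → ℕ) : Prop where
  continuous : Continuous p
  eq_zero : ∀ y ∈ B \ M.target, p y = 0
  le_succ : ∀ {i x}, x ∈ M.piece i → ∀ j, φ j x ∈ B → p (φ i x) ≤ p (φ j x) + 1

/-- The points of `B` from which an alternating path leads to an unmatched point of `B`, the label
`p` dropping by one at each step: from `y` it goes to the partner `x` of `y` and on to `φ i x`,
where `i` runs through the word. -/
def descent (M : ClopenMatching φ A B) (p : Y → ℕ) : List ι → Set Y
  | [] => B \ M.target
  | i :: w => p ⁻¹' {w.length + 1} ∩ ⋃ j, φ j '' (M.piece j ∩ φ i ⁻¹' M.descent p w)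

theorem mem_descent_cons {w : List ι} {y : Y} : y ∈ M.descent p (i :: w) ↔
    p y = w.length + 1 ∧ ∃ j, ∃ x ∈ M.piece j, φ i x ∈ M.descent p w ∧ φ j x = y := by
  simp [descent, and_assoc]

theorem descent_subset (M : ClopenMatching φ A B) (p : Y → ℕ) : ∀ w, M.descent p w ⊆ B
  | [] => Set.sdiff_subset
  | i :: w => fun y hy => by
    obtain ⟨-, j, x, hx, -, rfl⟩ := mem_descent_cons.1 hy
    exact M.mapsTo_piece j hx

theorem isClopen_descent [Finite ι] (M : ClopenMatching φ A B) (hB : IsClopen B)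
    (hp : Continuous p) : ∀ w, IsClopen (M.descent p w)
  | [] => hB.diff M.isClopen_target
  | i :: w => ((isClopen_discrete _).preimage hp).inter <| isClopen_iUnion_of_finite fun j =>
      isClopen_homeomorph_image (φ j) <|
        (M.isClopen_piece j).inter ((M.isClopen_descent hB hp w).preimage (φ i).continuous)

theorem IsPotential.eq_length (hp : M.IsPotential p) {w : List ι} {y : Y}
    (hy : y ∈ M.descent p w) : p y = w.length := by
  cases w with
  | nil => exact hp.eq_zero y hy
  | cons i w => exact (mem_descent_cons.1 hy).1

/-- The points of `A` that lose their partner when every `x ∈ Q` is matched to `φ i x`. -/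
def displaced (M : ClopenMatching φ A B) (i : ι) (Q : Set X) : Set X :=
  ⋃ j, M.piece j ∩ φ j ⁻¹' (φ i '' Q)

theorem mem_displaced {x : X} :
    x ∈ M.displaced i Q ↔ ∃ j, x ∈ M.piece j ∧ φ j x ∈ φ i '' Q := Set.mem_iUnion

theorem isClopen_displaced [Finite ι] (hQ : IsClopen Q) : IsClopen (M.displaced i Q) :=
  isClopen_iUnion_of_finite fun j => (M.isClopen_piece j).inter <|
    (isClopen_homeomorph_image (φ i) hQ).preimage (φ j).continuous

/-- The matching obtained by matching every `x ∈ Q` to `φ i x`, evicting the previous partners. -/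
def push (M : ClopenMatching φ A B) (i : ι) (hQ : IsClopen Q) (hQA : Q ⊆ A \ M.source)
    (hQB : Set.MapsTo (φ i) Q B) : ClopenMatching φ A B where
  piece j := M.piece j \ φ j ⁻¹' (φ i '' Q) ∪ {x | x ∈ Q ∧ j = i}
  isClopen_piece j := by
    refine ((M.isClopen_piece j).diff <|
      (isClopen_homeomorph_image (φ i) hQ).preimage (φ j).continuous).union ?_
    by_cases hj : j = i <;> simp [hj, hQ, isClopen_empty]
  piece_subset j := by
    rintro x (⟨hx, -⟩ | ⟨hx, -⟩)
    exacts [M.piece_subset j hx, (hQA hx).1]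
  mapsTo_piece j := by
    rintro x (⟨hx, -⟩ | ⟨hx, rfl⟩)
    exacts [M.mapsTo_piece j hx, hQB hx]
  eq_of_mem_piece := by
    rintro j l x (⟨hx, -⟩ | ⟨hx, rfl⟩) (⟨hx', -⟩ | ⟨hx', rfl⟩)
    exacts [M.eq_of_mem_piece hx hx', ((hQA hx').2 (mem_source.2 ⟨_, hx⟩)).elim,
      ((hQA hx).2 (mem_source.2 ⟨_, hx'⟩)).elim, rfl]
  eq_of_apply_eq := by
    rintro j l x y (⟨hx, hxQ⟩ | ⟨hx, rfl⟩) (⟨hy, hyQ⟩ | ⟨hy, rfl⟩) hxy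
    exacts [M.eq_of_apply_eq hx hy hxy, (hxQ ⟨y, hy, hxy.symm⟩).elim,
      (hyQ ⟨x, hx, hxy⟩).elim, rfl]

section push

variable {hQ : IsClopen Q} {hQA : Q ⊆ A \ M.source} {hQB : Set.MapsTo (φ i) Q B}

theorem mem_piece_push {j : ι} {x : X} : x ∈ (M.push i hQ hQA hQB).piece j ↔
    x ∈ M.piece j ∧ φ j x ∉ φ i '' Q ∨ x ∈ Q ∧ j = i := Iff.rfl

theorem source_push : (M.push i hQ hQA hQB).source = M.source \ M.displaced i Q ∪ Q := by
  ext x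
  simp only [mem_source, mem_piece_push, Set.mem_union, Set.mem_sdiff, mem_displaced]
  constructor
  · rintro ⟨j, ⟨hx, hxQ⟩ | ⟨hx, -⟩⟩
    · refine Or.inl ⟨⟨j, hx⟩, ?_⟩
      rintro ⟨l, hl, hlQ⟩
      obtain rfl := M.eq_of_mem_piece hx hl
      exact hxQ hlQ
    · exact Or.inr hx
  · rintro (⟨⟨j, hx⟩, hxQ⟩ | hx)
    · exact ⟨j, Or.inl ⟨hx, fun h => hxQ ⟨j, hx, h⟩⟩⟩
    · exact ⟨i, Or.inr ⟨hx, rfl⟩⟩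

theorem target_push : (M.push i hQ hQA hQB).target = M.target ∪ φ i '' Q := by
  ext y
  simp only [mem_target, mem_piece_push, Set.mem_union]
  constructor
  · rintro ⟨j, x, ⟨hx, -⟩ | ⟨hx, rfl⟩, rfl⟩
    exacts [Or.inl ⟨j, x, hx, rfl⟩, Or.inr ⟨x, hx, rfl⟩]
  · intro hy
    by_cases hyQ : y ∈ φ i '' Q
    · obtain ⟨x, hx, rfl⟩ := hyQ
      exact ⟨i, x, Or.inr ⟨hx, rfl⟩, rfl⟩
    · obtain ⟨j, x, hx, rfl⟩ := hy.resolve_right hyQ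
      exact ⟨j, x, Or.inl ⟨hx, hyQ⟩, rfl⟩

theorem IsPotential.push (hp : M.IsPotential p)
    (hlow : ∀ x ∈ Q, x ∈ aboveLevel φ B p (p (φ i x))) :
    (M.push i hQ hQA hQB).IsPotential p where
  continuous := hp.continuous
  eq_zero y hy := hp.eq_zero y ⟨hy.1, fun h => hy.2 (target_push.ge (Or.inl h))⟩
  le_succ := by
    rintro j x (⟨hx, -⟩ | ⟨hx, rfl⟩) l hl
    exacts [hp.le_succ hx l hl, (hlow x hx l hl).trans (Nat.le_succ _)]

/-- The new edges do not descend, so a push creates no new descending paths. -/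
theorem descent_push_subset (hp : M.IsPotential p)
    (hlow : ∀ x ∈ Q, x ∈ aboveLevel φ B p (p (φ i x))) (w : List ι) :
    (M.push i hQ hQA hQB).descent p w ⊆ M.descent p w := by
  induction w with
  | nil => exact Set.sdiff_subset_sdiff_right (target_push.ge.trans' Set.subset_union_left)
  | cons l w ih =>
    intro y hy
    obtain ⟨hpy, j, x, hx, hlx, rfl⟩ := mem_descent_cons.1 hy
    obtain ⟨hx, -⟩ | ⟨hx, rfl⟩ := hx
    · exact mem_descent_cons.2 ⟨hpy, j, x, hx, ih hlx, rfl⟩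
    · have hge := hlow x hx l (descent_subset _ _ _ hlx)
      have hpl := hp.eq_length (ih hlx)
      omega

theorem subset_descent_push (hp : M.IsPotential p) {w : List ι}
    (hhigh : ∀ x ∈ Q, w.length < p (φ i x)) :
    M.descent p w ⊆ (M.push i hQ hQA hQB).descent p w := by
  induction w with
  | nil =>
    intro y hy
    refine ⟨hy.1, fun hyt => ?_⟩
    obtain ⟨x, hx, rfl⟩ := (target_push.le hyt).resolve_left hy.2
    exact (hhigh x hx).ne' (hp.eq_zero _ hy)
  | cons l w ih =>
    intro y hy
    obtain ⟨hpy, j, x, hx, hlx, rfl⟩ := mem_descent_cons.1 hy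
    refine mem_descent_cons.2 ⟨hpy, j, x, Or.inl ⟨hx, ?_⟩,
      ih (fun x hx => (Nat.lt_succ_self _).trans (hhigh x hx)) hlx, rfl⟩
    rintro ⟨z, hz, hzx⟩
    exact (hhigh z hz).ne' (by rw [hzx, hpy, List.length_cons])

end push

theorem displaced_subset_diff_source_push {hQ : IsClopen Q} {hQA : Q ⊆ A \ M.source}
    {hQB : Set.MapsTo (φ i) Q B} : M.displaced i Q ⊆ A \ (M.push i hQ hQA hQB).source := by
  intro x hx
  obtain ⟨j, hxj, -⟩ := mem_displaced.1 hx
  rw [source_push]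
  refine ⟨M.piece_subset j hxj, ?_⟩
  rintro (⟨-, h⟩ | h)
  exacts [h hx, (hQA h).2 (mem_source.2 ⟨j, hxj⟩)]

theorem displaced_eq_empty (hQ : φ i '' Q ⊆ B \ M.target) : M.displaced i Q = ∅ := by
  refine Set.eq_empty_of_forall_notMem fun x hx => ?_
  obtain ⟨j, hxj, hxQ⟩ := mem_displaced.1 hx
  exact (hQ hxQ).2 (mem_target.2 ⟨j, x, hxj, rfl⟩)

theorem mapsTo_displaced_descent {l : ι} {w : List ι} (hQ : φ i '' Q ⊆ M.descent p (l :: w)) :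
    Set.MapsTo (φ l) (M.displaced i Q) (M.descent p w) := by
  intro x hx
  obtain ⟨j, hxj, hxQ⟩ := mem_displaced.1 hx
  obtain ⟨-, j', x', hx', hlx', hxx'⟩ := mem_descent_cons.1 (hQ hxQ)
  rwa [eq_of_apply_eq_apply hxj hx' hxx'.symm]

theorem IsPotential.displaced_subset_aboveLevel (hp : M.IsPotential p)
    (hQ : ∀ x ∈ Q, p (φ i x) = k + 1) : M.displaced i Q ⊆ aboveLevel φ B p k := by
  intro x hx l hl
  obtain ⟨j, hxj, z, hz, hzx⟩ := mem_displaced.1 hx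
  have hle := hp.le_succ hxj l hl
  rw [← hzx, hQ z hz] at hle
  omega

/-- Adds one to the labels of all points that are on no descending path. -/
noncomputable def raise (M : ClopenMatching φ A B) (p : Y → ℕ) : Y → ℕ :=
  p + (⋃ w, M.descent p w)ᶜ.indicator 1

theorem raise_of_mem {w : List ι} {y : Y} (hy : y ∈ M.descent p w) : M.raise p y = p y := by
  simpa [raise] using ⟨w, hy⟩

theorem raise_of_forall_notMem {y : Y} (hy : ∀ w, y ∉ M.descent p w) :
    M.raise p y = p y + 1 := by
  simp [raise, hy]

theorem IsPotential.diff_source_subset_aboveLevel_raise (hp : M.IsPotential p)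
    (hM : A \ M.source ⊆ aboveLevel φ B p k)
    (hblocked : ∀ i w, w.length = k → ∀ x ∈ A \ M.source, φ i x ∉ M.descent p w) :
    A \ M.source ⊆ aboveLevel φ B (M.raise p) (k + 1) := by
  intro x hx i hi
  have hk := hM hx i hi
  by_cases h : ∃ w, φ i x ∈ M.descent p w
  · obtain ⟨w, hw⟩ := h
    have hne : w.length ≠ k := fun hwk => hblocked i w hwk x hx hw
    have := hp.eq_length hw
    rw [raise_of_mem hw]
    omega
  · rw [raise_of_forall_notMem (not_exists.1 h)]
    omega

variable [Finite ι]

/-- Simultaneous augmentation along all paths that start in `Q` and follow the word `i :: w`: these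
are vertex-disjoint, as each step of the word acts on `X` as an injective partial map. -/
theorem IsPotential.exists_augment {w : List ι} (hp : M.IsPotential p) (hQ : IsClopen Q)
    (hQA : Q ⊆ A \ M.source) (hQd : Set.MapsTo (φ i) Q (M.descent p w))
    (hQp : Q ⊆ aboveLevel φ B p w.length) :
    ∃ M' : ClopenMatching φ A B, M'.IsPotential p ∧ M'.source = M.source ∪ Q ∧
      ∀ v, M'.descent p v ⊆ M.descent p v := by
  induction w generalizing M i Q with
  | nil =>
    have hlow : ∀ x ∈ Q, x ∈ aboveLevel φ B p (p (φ i x)) := fun x hx =>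
      hp.eq_length (hQd hx) ▸ hQp hx
    refine ⟨M.push i hQ hQA (hQd.mono_right (descent_subset _ _ _)), hp.push hlow, ?_,
      descent_push_subset hp hlow⟩
    rw [source_push, displaced_eq_empty hQd.image_subset, Set.sdiff_empty]
  | cons l w ih =>
    have hpQ : ∀ x ∈ Q, p (φ i x) = w.length + 1 := fun x hx => hp.eq_length (hQd hx)
    have hlow : ∀ x ∈ Q, x ∈ aboveLevel φ B p (p (φ i x)) := fun x hx => hpQ x hx ▸ hQp hx
    have hQB : Set.MapsTo (φ i) Q B := hQd.mono_right (descent_subset _ _ _)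
    obtain ⟨M', hp', hsource, hdescent⟩ := ih (M := M.push i hQ hQA hQB) (i := l)
      (hp.push hlow) (isClopen_displaced hQ) displaced_subset_diff_source_push
      ((mapsTo_displaced_descent hQd.image_subset).mono_right <|
        subset_descent_push hp fun x hx => (hpQ x hx).ge)
      (hp.displaced_subset_aboveLevel hpQ)
    have hdisplaced : M.displaced i Q ⊆ M.source :=
      Set.iUnion_mono fun _ => Set.inter_subset_left
    refine ⟨M', hp', ?_, fun v => (hdescent v).trans (descent_push_subset hp hlow v)⟩
    rw [hsource, source_push, Set.union_right_comm, Set.sdiff_union_of_subset hdisplaced]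

theorem IsPotential.exists_augment_all (hA : IsClopen A) (hB : IsClopen B) (hp : M.IsPotential p)
    (hM : A \ M.source ⊆ aboveLevel φ B p k) {W : Set (ι × List ι)} (hW : W.Finite)
    (hWk : ∀ q ∈ W, q.2.length = k) :
    ∃ M' : ClopenMatching φ A B, M'.IsPotential p ∧ A \ M'.source ⊆ aboveLevel φ B p k ∧
      ∀ q ∈ W, ∀ x ∈ A \ M'.source, φ q.1 x ∉ M'.descent p q.2 := by
  induction W, hW using Set.Finite.induction_on with
  | empty => exact ⟨M, hp, hM, by simp⟩
  | @insert q W _ _ ih =>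
    obtain ⟨M₁, hp₁, hM₁, hW₁⟩ := ih fun q hq => hWk q (Or.inr hq)
    let Q : Set X := (A \ M₁.source) ∩ φ q.1 ⁻¹' M₁.descent p q.2
    have hQ : IsClopen Q := (hA.diff M₁.isClopen_source).inter <|
      (M₁.isClopen_descent hB hp₁.continuous q.2).preimage (φ q.1).continuous
    obtain ⟨M₂, hp₂, hsource, hdescent⟩ := hp₁.exists_augment hQ Set.inter_subset_left
      (fun x hx => hx.2) (hWk q (Or.inl rfl) ▸ Set.inter_subset_left.trans hM₁)
    have hA₂ : A \ M₂.source ⊆ A \ M₁.source :=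
      Set.sdiff_subset_sdiff_right (hsource ▸ Set.subset_union_left)
    refine ⟨M₂, hp₂, hA₂.trans hM₁, ?_⟩
    rintro q' (rfl | hq') x hx hxd
    · exact hx.2 (hsource ▸ Or.inr ⟨hA₂ hx, hdescent _ hxd⟩)
    · exact hW₁ q' hq' x (hA₂ hx) (hdescent _ hxd)

theorem IsPotential.isClopen_iUnion_descent (hB : IsClopen B) (hp : M.IsPotential p) :
    IsClopen (⋃ w, M.descent p w) := by
  have hclopen := M.isClopen_descent hB hp.continuous
  refine ⟨⟨?_⟩, isOpen_iUnion fun w => (hclopen w).isOpen⟩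
  have hcompl : (⋃ w, M.descent p w)ᶜ =
      ⋃ n, p ⁻¹' {n} \ ⋃ w ∈ {w : List ι | w.length = n}, M.descent p w := by
    ext y
    simp only [Set.mem_compl_iff, Set.mem_iUnion, Set.mem_sdiff, Set.mem_preimage,
      Set.mem_singleton_iff, Set.mem_ofPred_eq, exists_eq_left', not_exists]
    exact ⟨fun h w _ => h w, fun h w hw => h w (hp.eq_length hw).symm hw⟩
  rw [hcompl]
  exact isOpen_iUnion fun n => (((isClopen_discrete _).preimage hp.continuous).diff
    ((List.finite_length_eq ι n).isClopen_biUnion fun w _ => hclopen w)).isOpen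

theorem IsPotential.raise (hB : IsClopen B) (hp : M.IsPotential p) :
    M.IsPotential (M.raise p) where
  continuous := hp.continuous.add <| continuous_one.indicator fun y hy => by
    rw [(hp.isClopen_iUnion_descent hB).compl.frontier_eq] at hy
    exact hy.elim
  eq_zero y hy := (raise_of_mem (w := []) hy).trans (hp.eq_zero y hy)
  le_succ {i x} hx j hj := by
    have hstep := hp.le_succ hx j hj
    by_cases hi : ∃ w, φ i x ∈ M.descent p w
    · obtain ⟨w, hw⟩ := hi
      have : p (φ j x) ≤ M.raise p (φ j x) := Nat.le_add_right _ _
      rw [raise_of_mem hw]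
      omega
    rw [raise_of_forall_notMem (not_exists.1 hi)]
    by_cases hj : ∃ w, φ j x ∈ M.descent p w
    · obtain ⟨w, hw⟩ := hj
      have hne : p (φ i x) ≠ w.length + 1 := fun h =>
        hi ⟨j :: w, mem_descent_cons.2 ⟨h, i, x, hx, hw, rfl⟩⟩
      rw [raise_of_mem hw]
      have := hp.eq_length hw
      omega
    · rw [raise_of_forall_notMem (not_exists.1 hj)]
      omega

theorem exists_isPotential (φ : ι → X ≃ₜ Y) (hA : IsClopen A) (hB : IsClopen B) (k : ℕ) :
    ∃ (M : ClopenMatching φ A B) (p : Y → ℕ),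
      M.IsPotential p ∧ A \ M.source ⊆ aboveLevel φ B p k := by
  induction k with
  | zero =>
    exact ⟨⟨fun _ => ∅, fun _ => isClopen_empty, by simp, by simp [Set.MapsTo], by simp, by simp⟩,
      0, ⟨continuous_zero, by simp, by simp⟩, by simp [aboveLevel]⟩
  | succ k ih =>
    obtain ⟨M, p, hp, hM⟩ := ih
    have hW : {q : ι × List ι | q.2.length = k}.Finite :=
      (Set.finite_univ.prod (List.finite_length_eq ι k)).subset fun q hq => ⟨trivial, hq⟩
    obtain ⟨M', hp', hM', hblocked⟩ := hp.exists_augment_all hA hB hM hW fun _ hq => hq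
    exact ⟨M', M'.raise p, hp'.raise hB,
      hp'.diff_source_subset_aboveLevel_raise hM' fun i w hw => hblocked (i, w) hw⟩

end ClopenMatching

/-- The points of `B` adjacent to `S` in the bipartite graph that joins `x` to every `φ i x ∈ B`. -/
def neighbors (φ : ι → X ≃ₜ Y) (B : Set Y) (S : Set X) : Set Y := B ∩ ⋃ i, φ i '' S

theorem mem_neighbors {S : Set X} {y : Y} :
    y ∈ neighbors φ B S ↔ y ∈ B ∧ ∃ i, ∃ x ∈ S, φ i x = y := by
  simp [neighbors]

/-- The bipartite graph between `A` and `B` with edges `x — φ i x` expands every finite subset of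
`A` by the factor `c`. -/
def Expands (φ : ι → X ≃ₜ Y) (A : Set X) (B : Set Y) (c : ℝ) : Prop :=
  ∀ S ⊆ A, S.Finite → c * S.ncard ≤ (neighbors φ B S).ncard

/-- All neighbours of a set of high label are matched, so passing to their partners multiplies the
size by the expansion factor at the cost of one label. -/
theorem Expands.exists_finite_subset_aboveLevel [Finite ι] {c : ℝ} {p : Y → ℕ}
    {M : ClopenMatching φ A B} (hexp : Expands φ A B c) (hp : M.IsPotential p) {m : ℕ} {S : Set X}
    (hS : S.Finite) (hSA : S ⊆ A ∩ aboveLevel φ B p (m + 1)) :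
    ∃ S' : Set X, S'.Finite ∧ S' ⊆ A ∩ aboveLevel φ B p m ∧ c * S.ncard ≤ S'.ncard ∧
      ∀ x' ∈ S', ∃ x ∈ S, ∃ i j, φ j x' = φ i x := by
  have hmatched : ∀ y : neighbors φ B S, ∃ i, ∃ x ∈ M.piece i, φ i x = y := by
    rintro ⟨y, hy⟩
    obtain ⟨hyB, i, x, hx, rfl⟩ := mem_neighbors.1 hy
    by_contra hfree
    have hzero := hp.eq_zero _ ⟨hyB, mt ClopenMatching.mem_target.1 hfree⟩
    have hpos := (hSA hx).2 i hyB
    omega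
  choose edge partner hpartner hedge using hmatched
  have hinj : Function.Injective partner := by
    intro y z h
    have : edge y = edge z := M.eq_of_mem_piece (hpartner y) (h ▸ hpartner z)
    rw [Subtype.ext_iff, ← hedge y, ← hedge z, h, this]
  have : Finite (neighbors φ B S) :=
    (Set.finite_iUnion fun i => hS.image (φ i)).subset Set.inter_subset_right
  refine ⟨Set.range partner, Set.finite_range _, ?_, ?_, ?_⟩
  · rintro _ ⟨⟨y, hy⟩, rfl⟩
    refine ⟨M.piece_subset _ (hpartner _), fun j hj => ?_⟩
    have hstep := hp.le_succ (hpartner _) j hj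
    rw [hedge] at hstep
    obtain ⟨hyB, i, x, hx, rfl⟩ := mem_neighbors.1 hy
    exact Nat.le_of_succ_le_succ (((hSA hx).2 i hyB).trans hstep)
  · rw [Set.ncard_range_of_injective hinj, Nat.card_coe_set_eq]
    exact hexp S (fun x hx => (hSA hx).1) hS
  · rintro _ ⟨⟨y, hy⟩, rfl⟩
    obtain ⟨-, i, x, hx, hxy⟩ := mem_neighbors.1 hy
    exact ⟨x, hx, i, edge _, (hedge _).trans hxy.symm⟩

end Matching

section Growth

variable {G : Type*} [Group G]

theorem Subexponential.eventually_card_pow_lt [DecidableEq G] (hsub : Subexponential G)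
    (R : Finset G) {c : ℝ} (hc : 1 < c) :
    ∀ᶠ n : ℕ in atTop, (((R ∪ R⁻¹) ^ n).card : ℝ) < c ^ n := by
  have hlog := (hsub R).eventually_lt_const (Real.log_pos hc)
  filter_upwards [hlog, eventually_gt_atTop 0] with n hn hn0
  rw [← Finset.coe_inv, ← Finset.coe_union, ← Finset.coe_pow, Set.ncard_coe_finset,
    div_lt_iff₀ (by positivity), mul_comm, ← Real.log_pow] at hn
  obtain hzero | hpos := (Nat.cast_nonneg (α := ℝ) ((R ∪ R⁻¹) ^ n).card).eq_or_lt
  · rw [← hzero]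
    positivity
  · exact (Real.log_lt_log_iff hpos (by positivity)).1 hn

theorem Subexponential.exists_card_pow_two_mul_lt [DecidableEq G] (hsub : Subexponential G)
    (R : Finset G) {c : ℝ} (hc : 1 < c) :
    ∃ n : ℕ, (((R ∪ R⁻¹) ^ (2 * n)).card : ℝ) < c ^ n := by
  have htwo : Tendsto (fun n : ℕ => 2 * n) atTop atTop :=
    tendsto_id.const_mul_atTop' two_pos
  obtain ⟨n, hn⟩ := (htwo.eventually
    (hsub.eventually_card_pow_lt R (Real.lt_sqrt_of_sq_lt (by simpa using hc)))).exists
  exact ⟨n, by rwa [pow_mul √c, Real.sq_sqrt (by linarith)] at hn⟩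

variable {X : Type*} [TopologicalSpace X] [MulAction G X] [ContinuousConstSMul G X]
  {A B : Set X} {c : ℝ}

variable (X) in
/-- The translations of `X` by the elements of `R`. -/
def translations (R : Finset G) (r : R) : X ≃ₜ X := Homeomorph.smul (r : G)

theorem Expands.exists_subset_pow_smul [DecidableEq G] {R : Finset G} {p : X → ℕ}
    {M : ClopenMatching (translations X R) A B} (hc : 0 ≤ c)
    (hexp : Expands (translations X R) A B c) (hp : M.IsPotential p) {a : X} (ha : a ∈ A) (n m : ℕ)
    (ham : a ∈ aboveLevel (translations X R) B p (m + n)) :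
    ∃ S : Set X, S.Finite ∧ S ⊆ A ∩ aboveLevel (translations X R) B p m ∧ c ^ n ≤ S.ncard ∧
      ∀ x ∈ S, ∃ g ∈ (R ∪ R⁻¹) ^ (2 * n), g • a = x := by
  induction n generalizing m with
  | zero => exact ⟨{a}, Set.finite_singleton a, by simpa using ⟨ha, ham⟩, by simp, by simp⟩
  | succ n ih =>
    obtain ⟨S, hS, hSm, hcard, hSa⟩ := ih (m + 1) (by rwa [add_assoc, add_comm 1 n])
    obtain ⟨S', hS', hSm', hcard', hadj⟩ := hexp.exists_finite_subset_aboveLevel hp hS hSm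
    refine ⟨S', hS', hSm', ?_, fun x' hx' => ?_⟩
    · calc c ^ (n + 1) = c * c ^ n := pow_succ' c n
        _ ≤ c * S.ncard := by gcongr
        _ ≤ S'.ncard := hcard'
    · obtain ⟨x, hx, ⟨r, hr⟩, ⟨s, hs⟩, hsr⟩ := hadj x' hx'
      obtain ⟨g, hg, rfl⟩ := hSa x hx
      have hsr : s • x' = r • g • a := hsr
      refine ⟨s⁻¹ * (r * g), ?_, by rw [mul_smul, mul_smul, ← hsr, inv_smul_smul]⟩
      rw [mul_add_one, pow_succ', pow_succ']
      exact Finset.mul_mem_mul (Finset.mem_union_right _ (Finset.inv_mem_inv hs))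
        (Finset.mul_mem_mul (Finset.mem_union_left _ hr) hg)

theorem Subexponential.exists_subset_source (hsub : Subexponential G) {R : Finset G} (hc : 1 < c)
    (hA : IsClopen A) (hB : IsClopen B) (hexp : Expands (translations X R) A B c) :
    ∃ M : ClopenMatching (translations X R) A B, A ⊆ M.source := by
  classical
  obtain ⟨n, hn⟩ := hsub.exists_card_pow_two_mul_lt R hc
  obtain ⟨M, p, hp, hM⟩ := ClopenMatching.exists_isPotential (translations X R) hA hB n
  refine ⟨M, fun a ha => by_contra fun hsource => hn.not_ge ?_⟩
  obtain ⟨S, -, -, hcard, hSa⟩ := hexp.exists_subset_pow_smul (zero_le_one.trans hc.le) hp ha n 0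
    (by simpa using hM ⟨ha, hsource⟩)
  have hsubset : S ⊆ (· • a) '' (((R ∪ R⁻¹) ^ (2 * n) : Finset G) : Set G) := hSa
  have hle : S.ncard ≤ ((R ∪ R⁻¹) ^ (2 * n)).card :=
    calc S.ncard ≤ _ := Set.ncard_le_ncard hsubset ((Finset.finite_toSet _).image _)
      _ ≤ _ := Set.ncard_image_le (Finset.finite_toSet _)
      _ = _ := Set.ncard_coe_finset _
  exact hcard.trans (mod_cast hle)

theorem ClopenMatching.subequiv {R : Finset G} (M : ClopenMatching (translations X R) A B)
    (hM : A ⊆ M.source) : Subequiv G X A B := by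
  let e := R.equivFin.symm
  refine ⟨R.card, fun k => M.piece (e k), fun k => e k, fun k => M.isClopen_piece _, ?_, ?_,
    fun k => (M.mapsTo_piece _).image_subset, ?_⟩
  · rw [e.surjective.iUnion_comp M.piece]
    exact hM.antisymm (Set.iUnion_subset M.piece_subset)
  · refine fun k l hkl => Set.disjoint_left.2 fun x hk hl => hkl ?_
    exact e.injective (M.eq_of_mem_piece hk hl)
  · refine fun k l hkl => Set.disjoint_left.2 ?_
    rintro _ ⟨x, hx, rfl⟩ ⟨y, hy, hxy⟩
    exact hkl (e.injective (M.eq_of_apply_eq hx hy hxy.symm))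

end Growth

section Counting

variable {G X : Type*} [Group G] [MulAction G X] {A B : Set X}

theorem sum_indicator_one_smul (T : Finset X) (C : Set X) (g : G) :
    ∑ x ∈ T, C.indicator (1 : X → ℕ) (g • x) = (g • (T : Set X) ∩ C).ncard := by
  classical
  calc ∑ x ∈ T, C.indicator (1 : X → ℕ) (g • x) = {x ∈ T | g • x ∈ C}.card := by
        simp [Set.indicator_apply]
    _ = (g • {x ∈ T | g • x ∈ C}).card := (Finset.card_smul_finset _ _).symm
    _ = (g • (T : Set X) ∩ C).ncard := by
        rw [← Set.ncard_coe_finset]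
        congr 1
        ext y
        simp [Set.mem_smul_set_iff_inv_smul_mem]

theorem card_mul_card_le_sum_indicator [DecidableEq G] [DecidableEq X] (F : Finset G)
    {S : Finset X} (hSA : (S : Set X) ⊆ A) :
    F.card * S.card ≤ ∑ g ∈ F, ∑ x ∈ F⁻¹ • S, A.indicator (1 : X → ℕ) (g • x) := by
  refine F.card_nsmul_le_sum _ _ fun g hg => ?_
  rw [sum_indicator_one_smul, ← Set.ncard_coe_finset S]
  refine Set.ncard_le_ncard (fun x hx => ⟨Set.mem_smul_set_iff_inv_smul_mem.2 ?_, hSA hx⟩)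
    ((Finset.finite_toSet _).smul_set.inter_of_left _)
  exact Finset.smul_mem_smul (Finset.inv_mem_inv hg) hx

theorem sum_indicator_le_card_mul_ncard_neighbors [TopologicalSpace X] [ContinuousConstSMul G X]
    [DecidableEq G] [DecidableEq X] (F : Finset G) (S : Finset X) :
    ∑ g ∈ F, ∑ x ∈ F⁻¹ • S, B.indicator (1 : X → ℕ) (g • x) ≤
      F.card * (neighbors (translations X (F * F⁻¹)) B S).ncard := by
  refine F.sum_le_card_nsmul _ _ fun g hg => ?_
  rw [sum_indicator_one_smul]
  refine Set.ncard_le_ncard ?_ ((Set.finite_iUnion fun r =>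
    S.finite_toSet.image (translations X (F * F⁻¹) r)).inter_of_right _)
  rintro _ ⟨⟨t, ht, rfl⟩, hB⟩
  obtain ⟨h, hh, x, hx, rfl⟩ := Finset.mem_smul.1 ht
  exact mem_neighbors.2 ⟨hB, ⟨g * h, Finset.mul_mem_mul hg hh⟩, x, hx, mul_smul g h x⟩

/-- Double counting of the pairs `(g, t) ∈ F × F⁻¹ • S` with `g • t ∈ A`, respectively in `B`. -/
theorem expands_of_forall_sum_indicator_lt [TopologicalSpace X] [ContinuousConstSMul G X]
    [DecidableEq G] {F : Finset G} (hF : F.Nonempty)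
    (hlt : ∀ x : X,
      ∑ g ∈ F, A.indicator (1 : X → ℕ) (g • x) < ∑ g ∈ F, B.indicator (1 : X → ℕ) (g • x)) :
    Expands (translations X (F * F⁻¹)) A B (1 + (F.card : ℝ)⁻¹) := by
  classical
  intro S hSA hS
  lift S to Finset X using hS
  set N := neighbors (translations X (F * F⁻¹)) B S
  let T : Finset X := F⁻¹ • S
  have hupper : ∑ g ∈ F, ∑ x ∈ T, B.indicator (1 : X → ℕ) (g • x) ≤ F.card * N.ncard :=
    sum_indicator_le_card_mul_ncard_neighbors F S
  have hgap : ∑ g ∈ F, ∑ x ∈ T, A.indicator (1 : X → ℕ) (g • x) + T.card ≤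
      ∑ g ∈ F, ∑ x ∈ T, B.indicator (1 : X → ℕ) (g • x) := by
    rw [Finset.sum_comm, Finset.sum_comm (s := F), Finset.card_eq_sum_ones,
      ← Finset.sum_add_distrib]
    exact Finset.sum_le_sum fun x _ => hlt x
  have hST : S.card ≤ T.card := by
    obtain ⟨g, hg⟩ := hF
    exact (Finset.card_smul_finset g⁻¹ S).symm.trans_le
      (Finset.card_le_card (Finset.smul_finset_subset_smul (Finset.inv_mem_inv hg)))
  have hlower : F.card * S.card ≤ ∑ g ∈ F, ∑ x ∈ T, A.indicator (1 : X → ℕ) (g • x) :=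
    card_mul_card_le_sum_indicator F hSA
  have hle : F.card * S.card + S.card ≤ F.card * N.ncard := by omega
  have hF0 : (0 : ℝ) < F.card := mod_cast hF.card_pos
  rw [Set.ncard_coe_finset]
  refine le_of_mul_le_mul_left ?_ hF0
  rw [← mul_assoc, mul_add, mul_inv_cancel₀ hF0.ne', add_mul, mul_one, one_mul]
  exact_mod_cast hle

end Counting

section Foelner

open scoped symmDiff

variable {G : Type*} [Group G]

theorem Subexponential.exists_card_pow_succ_le [DecidableEq G] (hsub : Subexponential G)
    (R : Finset G) {ε : ℝ} (hε : 0 < ε) :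
    ∃ n : ℕ, (((R ∪ R⁻¹) ^ (n + 1)).card : ℝ) ≤ (1 + ε) * ((R ∪ R⁻¹) ^ n).card := by
  by_contra! hgrowth
  have hpow (n : ℕ) : (1 + ε) ^ n ≤ ((R ∪ R⁻¹) ^ n).card := by
    induction n with
    | zero => simp
    | succ n ih =>
      calc (1 + ε) ^ (n + 1) = (1 + ε) * (1 + ε) ^ n := pow_succ' _ _
        _ ≤ (1 + ε) * ((R ∪ R⁻¹) ^ n).card := by gcongr
        _ ≤ ((R ∪ R⁻¹) ^ (n + 1)).card := (hgrowth n).le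
  obtain ⟨n, hn⟩ := (hsub.eventually_card_pow_lt R (lt_add_of_pos_right 1 hε)).exists
  exact hn.not_ge (hpow n)

theorem card_symmDiff_add_card_add_card_le {α : Type*} [DecidableEq α] {s t u : Finset α}
    (hs : s ⊆ u) (ht : t ⊆ u) : (s ∆ t).card + s.card + t.card ≤ 2 * u.card := by
  have hsymm : (s ∆ t).card ≤ (u \ t).card + (u \ s).card :=
    (Finset.card_union_le _ _).trans (by gcongr)
  rw [Finset.card_sdiff_of_subset hs, Finset.card_sdiff_of_subset ht] at hsymm
  have := Finset.card_le_card hs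
  have := Finset.card_le_card ht
  omega

theorem Subexponential.exists_card_symmDiff_le [DecidableEq G] (hsub : Subexponential G)
    (R : Finset G) {ε : ℝ} (hε : 0 < ε) :
    ∃ F : Finset G, F.Nonempty ∧ ∀ g ∈ R, (((g • F) ∆ F).card : ℝ) ≤ ε * F.card := by
  let Q : Finset G := insert 1 R ∪ (insert 1 R)⁻¹
  have hRQ : insert 1 R ⊆ Q := Finset.subset_union_left
  obtain ⟨n, hn⟩ := hsub.exists_card_pow_succ_le (insert 1 R) (half_pos hε)
  refine ⟨Q ^ n, Finset.Nonempty.pow ⟨1, hRQ (Finset.mem_insert_self 1 R)⟩, fun g hg => ?_⟩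
  have hsubset {h : G} (hh : h ∈ insert 1 R) : h • Q ^ n ⊆ Q ^ (n + 1) := by
    rw [pow_succ']
    exact Finset.smul_finset_subset_smul (hRQ hh)
  have hQn : Q ^ n ⊆ Q ^ (n + 1) := by simpa using hsubset (Finset.mem_insert_self 1 R)
  have hcard := card_symmDiff_add_card_add_card_le (hsubset (Finset.mem_insert_of_mem hg)) hQn
  rw [Finset.card_smul_finset] at hcard
  have hcard : (((g • Q ^ n) ∆ (Q ^ n)).card : ℝ) + (Q ^ n).card + (Q ^ n).card ≤
      2 * (Q ^ (n + 1)).card := mod_cast hcard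
  linarith

variable {I : Type*} {l : Filter I} {F : I → Finset G}

theorem isFoelner_count_iff [DecidableEq G] [MeasurableSpace G] [MeasurableSingletonClass G]
    (hF : ∀ i, (F i).Nonempty) :
    IsFoelner G Measure.count l (fun i => (F i : Set G)) ↔
      ∀ g : G, Tendsto (fun i => (((g • F i) ∆ F i).card : ℝ) / (F i).card) l (𝓝 0) := by
  have htop (g : G) (i : I) : (((g • F i) ∆ F i).card / (F i).card : ENNReal) ≠ ⊤ :=
    ENNReal.div_ne_top (by simp) (by simpa using (hF i).ne_empty)
  simp only [isFoelner_iff, Finset.measurableSet, Measure.count_apply_finset, ne_eq,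
    Nat.cast_eq_zero, Finset.card_eq_zero, (hF _).ne_empty, ENNReal.natCast_ne_top,
    not_false_eq_true, eventually_true, true_and, ← Finset.coe_smul_finset, ← Finset.coe_symmDiff]
  refine forall_congr' fun g => ?_
  rw [← ENNReal.tendsto_toReal_iff (htop g) ENNReal.zero_ne_top]
  simp

theorem Subexponential.exists_isFoelner [MeasurableSpace G] [MeasurableSingletonClass G]
    (hsub : Subexponential G) : ∃ F : Finset G × ℕ → Finset G, (∀ i, (F i).Nonempty) ∧
      IsFoelner G Measure.count atTop (fun i => (F i : Set G)) := by
  classical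
  choose F hF hFsymm using fun i : Finset G × ℕ =>
    hsub.exists_card_symmDiff_le i.1 (Nat.one_div_pos_of_nat (α := ℝ) (n := i.2))
  refine ⟨F, hF, (isFoelner_count_iff hF).2 fun g => ?_⟩
  have hsnd : Tendsto (Prod.snd : Finset G × ℕ → ℕ) atTop atTop := by
    rw [← prod_atTop_atTop_eq]
    exact tendsto_snd
  refine squeeze_zero' (.of_forall fun i => by positivity) ?_
    (tendsto_one_div_add_atTop_nhds_zero_nat.comp hsnd)
  filter_upwards [eventually_ge_atTop ({g}, 0)] with i hi
  have hFi : (0 : ℝ) < (F i).card := mod_cast (hF i).card_pos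
  exact (div_le_iff₀ hFi).2 (hFsymm i g (hi.1 (Finset.mem_singleton_self g)))

theorem abs_sum_sub_sum_le_card_symmDiff {α : Type*} [DecidableEq α] (s t : Finset α) {f : α → ℝ}
    {C : ℝ} (hf : ∀ a, |f a| ≤ C) :
    |∑ a ∈ s, f a - ∑ a ∈ t, f a| ≤ (s ∆ t).card * C := by
  have hsplit : ∑ a ∈ s, f a - ∑ a ∈ t, f a = ∑ a ∈ s \ t, f a - ∑ a ∈ t \ s, f a :=
    Finset.sum_sdiff_sub_sum_sdiff.symm
  have hbound (u : Finset α) : |∑ a ∈ u, f a| ≤ u.card * C :=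
    (Finset.abs_sum_le_sum_abs _ _).trans ((u.sum_le_card_nsmul _ _ fun a _ => hf a).trans_eq
      (nsmul_eq_mul _ _))
  calc |∑ a ∈ s, f a - ∑ a ∈ t, f a| ≤ |∑ a ∈ s \ t, f a| + |∑ a ∈ t \ s, f a| :=
        hsplit ▸ abs_sub _ _
    _ ≤ (s \ t).card * C + (t \ s).card * C := add_le_add (hbound _) (hbound _)
    _ = (s ∆ t).card * C := by
        rw [symmDiff, Finset.sup_eq_union, Finset.card_union_of_disjoint disjoint_sdiff_sdiff]
        push_cast
        ring

end Foelner

section InvariantMeasure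

open scoped symmDiff BoundedContinuousFunction

variable {G X : Type*} [Group G] [MulAction G X] [MeasurableSpace X]

/-- The uniform distribution on the points `g • x`, `g ∈ F`, counted with multiplicity. -/
noncomputable def empiricalMeasure (F : Finset G) (hF : F.Nonempty) (x : X) :
    ProbabilityMeasure X :=
  ⟨(F.card : ENNReal)⁻¹ • ∑ g ∈ F, Measure.dirac (g • x), ⟨by
    simp [ENNReal.inv_mul_cancel, hF.ne_empty]⟩⟩

theorem integral_empiricalMeasure [MeasurableSingletonClass X] {F : Finset G} (hF : F.Nonempty)
    (x : X) (f : X → ℝ) :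
    ∫ y, f y ∂(empiricalMeasure F hF x : Measure X) = (∑ g ∈ F, f (g • x)) / F.card := by
  simp [empiricalMeasure, integral_finsetSum_measure, integrable_dirac, div_eq_inv_mul]

theorem abs_integral_smul_sub_integral_empiricalMeasure_le [MeasurableSingletonClass X]
    [DecidableEq G] {F : Finset G} (hF : F.Nonempty) (x : X) {f : X → ℝ} {C : ℝ}
    (hf : ∀ y, |f y| ≤ C) (g : G) :
    |∫ y, f (g • y) ∂(empiricalMeasure F hF x : Measure X) -
      ∫ y, f y ∂(empiricalMeasure F hF x : Measure X)| ≤ ((g • F) ∆ F).card / F.card * C := by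
  have hshift : ∑ h ∈ F, f (g • h • x) = ∑ h ∈ g • F, f (h • x) := by
    rw [← Finset.image_smul, Finset.sum_image (MulAction.injective g).injOn]
    simp only [smul_eq_mul, mul_smul]
  rw [integral_empiricalMeasure hF x fun y => f (g • y), integral_empiricalMeasure, hshift,
    ← sub_div, abs_div, Nat.abs_cast, div_mul_eq_mul_div]
  gcongr
  exact abs_sum_sub_sum_le_card_symmDiff _ _ fun h => hf (h • x)

variable [TopologicalSpace X] [BorelSpace X] [ContinuousConstSMul G X]

theorem integral_smul_eq_of_tendsto_empiricalMeasure [T1Space X] [MeasurableSpace G]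
    [MeasurableSingletonClass G] {I : Type*} {l : Filter I} [l.NeBot]
    {F : I → Finset G} (hF : ∀ i, (F i).Nonempty)
    (hfoel : IsFoelner G Measure.count l fun i => (F i : Set G)) {x : I → X}
    {μ : ProbabilityMeasure X}
    (hμ : Tendsto (fun i => empiricalMeasure (F i) (hF i) (x i)) l (𝓝 μ)) (f : X →ᵇ ℝ) (g : G) :
    ∫ y, f (g • y) ∂(μ : Measure X) = ∫ y, f y ∂(μ : Measure X) := by
  classical
  have hlim := ProbabilityMeasure.tendsto_iff_forall_integral_tendsto.1 hμ
  have hzero : Tendsto (fun i => (((g • F i) ∆ F i).card : ℝ) / (F i).card * ‖f‖) l (𝓝 0) := by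
    simpa using ((isFoelner_count_iff hF).1 hfoel g).mul_const ‖f‖
  refine sub_eq_zero.1 (tendsto_nhds_unique ?_ (squeeze_zero_norm (fun i =>
    abs_integral_smul_sub_integral_empiricalMeasure_le (hF i) (x i) f.norm_coe_le_norm g) hzero))
  exact (hlim (f.compContinuous ⟨(g • ·), continuous_const_smul g⟩)).sub (hlim f)

theorem smulInvariantMeasure_of_integral_smul_eq [CompactSpace X] [T2Space X] {μ : Measure X}
    [μ.Regular] (hμ : ∀ (f : X →ᵇ ℝ) (g : G), ∫ y, f (g • y) ∂μ = ∫ y, f y ∂μ) :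
    SMulInvariantMeasure G X μ := by
  refine ((smulInvariantMeasure_tfae G μ).out 0 5).2 fun g => ?_
  have : (μ.map (g • ·)).Regular := Measure.Regular.map (Homeomorph.smul g)
  refine Measure.ext_of_integral_eq_on_compactlySupported fun f => ?_
  rw [(measurableEmbedding_const_smul g).integral_map]
  exact hμ (BoundedContinuousFunction.mkOfCompact f) g

theorem exists_smulInvariantMeasure_tendsto_average [CompactSpace X] [T2Space X]
    [MeasurableSpace G] [MeasurableSingletonClass G] {I : Type*} {l : Filter I} [l.NeBot]
    {F : I → Finset G} (hF : ∀ i, (F i).Nonempty)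
    (hfoel : IsFoelner G Measure.count l fun i => (F i : Set G)) (x : I → X) :
    ∃ (μ : Measure X) (u : Ultrafilter I), IsProbabilityMeasure μ ∧ SMulInvariantMeasure G X μ ∧
      ∀ f : X →ᵇ ℝ,
        Tendsto (fun i => (∑ g ∈ F i, f (g • x i)) / (F i).card) u (𝓝 (∫ y, f y ∂μ)) := by
  let u := Ultrafilter.of l
  let ν (i : I) : ProbabilityMeasure X := empiricalMeasure (F i) (hF i) (x i)
  obtain ⟨μ₀, -, hμ₀⟩ := isCompact_univ.ultrafilter_le_nhds (u.map ν) (by simp)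
  have hμ₀ : Tendsto ν u (𝓝 μ₀) := hμ₀
  obtain ⟨μ, hreg, -, hμ⟩ := Measure.exists_regular_eq_of_compactSpace (μ₀ : Measure X)
  have hprob : IsProbabilityMeasure μ :=
    isProbabilityMeasure_iff_real.2 (by simpa using (hμ (.const X 1)).symm)
  refine ⟨μ, u, hprob, smulInvariantMeasure_of_integral_smul_eq fun f g => ?_, fun f => ?_⟩
  · rw [← hμ f, ← integral_smul_eq_of_tendsto_empiricalMeasure hF
      (hfoel.mono (Ultrafilter.of_le l)) hμ₀ f g]
    exact (hμ (f.compContinuous ⟨(g • ·), continuous_const_smul g⟩)).symm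
  · rw [← hμ f]
    simpa only [ν, integral_empiricalMeasure] using
      ProbabilityMeasure.tendsto_iff_forall_integral_tendsto.1 hμ₀ f

/-- Otherwise the empirical measures of a Følner net, based at points where the sum is not positive,
accumulate at an invariant measure that contradicts the hypothesis. -/
theorem Subexponential.exists_forall_sum_pos [CompactSpace X] [T2Space X] (hsub : Subexponential G)
    (f : X →ᵇ ℝ)
    (hf : ∀ μ : Measure X, IsProbabilityMeasure μ → SMulInvariantMeasure G X μ → 0 < ∫ y, f y ∂μ) :
    ∃ F : Finset G, F.Nonempty ∧ ∀ x, 0 < ∑ g ∈ F, f (g • x) := by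
  classical
  by_contra! hcon
  let _ : MeasurableSpace G := ⊤
  have : MeasurableSingletonClass G := ⟨fun _ => trivial⟩
  obtain ⟨F, hF, hfoel⟩ := hsub.exists_isFoelner
  choose x hx using fun i => hcon (F i) (hF i)
  obtain ⟨μ, u, hprob, hinv, hlim⟩ := exists_smulInvariantMeasure_tendsto_average hF hfoel x
  refine (hf μ hprob hinv).not_ge (le_of_tendsto' (hlim f) fun i => ?_)
  exact div_nonpos_of_nonpos_of_nonneg (hx i) (Nat.cast_nonneg _)

theorem Subexponential.exists_forall_sum_indicator_lt [CompactSpace X] [T2Space X]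
    (hsub : Subexponential G) {A B : Set X} (hA : IsClopen A) (hB : IsClopen B)
    (hAB : ∀ μ : Measure X, IsProbabilityMeasure μ → SMulInvariantMeasure G X μ → μ A < μ B) :
    ∃ F : Finset G, F.Nonempty ∧ ∀ x : X,
      ∑ g ∈ F, A.indicator (1 : X → ℕ) (g • x) < ∑ g ∈ F, B.indicator (1 : X → ℕ) (g • x) := by
  let ind {C : Set X} (hC : IsClopen C) : X →ᵇ ℝ := .indicator C hC
  have hintegral {C : Set X} (hC : IsClopen C) (μ : Measure X) : ∫ y, ind hC y ∂μ = μ.real C :=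
    integral_indicator_one hC.isOpen.measurableSet
  have hcast {C : Set X} (hC : IsClopen C) (y : X) :
      ind hC y = (C.indicator (1 : X → ℕ) y : ℕ) := by
    by_cases hy : y ∈ C <;> simp [ind, hy]
  obtain ⟨F, hF, hpos⟩ := hsub.exists_forall_sum_pos (ind hB - ind hA) fun μ hprob hinv => by
    have hlt : μ.real A < μ.real B := ENNReal.toReal_strict_mono (by finiteness) (hAB μ hprob hinv)
    simp only [BoundedContinuousFunction.coe_sub, Pi.sub_apply]
    rwa [integral_sub ((ind hB).integrable μ) ((ind hA).integrable μ), hintegral, hintegral,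
      sub_pos]
  refine ⟨F, hF, fun x => ?_⟩
  have hsum := hpos x
  simp only [BoundedContinuousFunction.coe_sub, Pi.sub_apply, hcast, Finset.sum_sub_distrib,
    sub_pos] at hsum
  exact_mod_cast hsum

end InvariantMeasure

theorem stmt18_general {G : Type*} [Group G] (hsub : Subexponential G) {X : Type*}
    [TopologicalSpace X] [CompactSpace X] [T2Space X] [MeasurableSpace X] [BorelSpace X]
    [MulAction G X] [ContinuousConstSMul G X] : AdmitsComparison G X := by
  classical
  intro A B hA hB hAB
  obtain ⟨F, hF, hlt⟩ := hsub.exists_forall_sum_indicator_lt hA hB hAB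
  have hexp := expands_of_forall_sum_indicator_lt hF hlt
  have hc : 1 < 1 + (F.card : ℝ)⁻¹ := by simpa using hF
  obtain ⟨M, hM⟩ := hsub.exists_subset_source hc hA hB hexp
  exact M.subequiv hM

theorem stmt18 (G : Type*) [Group G] [Countable G]
    (hsub : Subexponential G) :
    ComparisonProperty G := by
  intro X _ _ _ _ _ _ _ _
  exact stmt18_general hsub
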